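/- arXiv:1911.02140 — 3 statements merged into one kernel-verified Lean document; each statement's English description precedes it below -/
import Mathlib

section
/- Let F : ℝ → ℝ be continuous and monotone non-decreasing, let N ≥ 2, and for fractions 0 = τ₀ < τ₁ < ... < τ_{N-1} < τ_N = 1 define the 1-Wasserstein approximation error W₁(τ₁, ..., τ_{N-1}) = Σ_{j=0}^{N-1} ∫_{τ_j}^{τ_{j+1}} |F(ω) − F((τ_j + τ_{j+1})/2)| dω. Then for each i with 1 ≤ i ≤ N−1, the partial derivative of W₁ with respect to τ_i exists at every point of the region {0 < τ₁ < ... < τ_{N-1} < 1} and equals 2F(τ_i) − F((τ_i + τ_{i+1})/2) − F((τ_{i-1} + τ_i)/2). -/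
/-!
Since `F` is monotone, `|F ω - F m|` changes from `F m - F ω` to `F ω - F m` at `m`, and when `m`
is the midpoint of `[a, b]` the contributions of the constant `F m` to the two halves cancel. With
`G` a primitive of `F`, the error on `[a, b]` is therefore `G a + G b - 2 * G ((a + b) / 2)`. Its
derivatives in the two endpoints are `F a - F m` and `F b - F m`, and `τ i` is an endpoint of
exactly two cells.
-/

open MeasureTheory Set

/-- The 1-Wasserstein error of approximating `F` on the cell `[a, b]` by its value at the
midpoint: one summand of `W₁`. -/
noncomputable def staircaseCellError (F : ℝ → ℝ) (a b : ℝ) : ℝ :=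
  ∫ ω in a..b, |F ω - F ((a + b) / 2)|

/-- The 1-Wasserstein error `W₁(τ)` of the midpoint staircase approximation of `F` with nodes
`τ 0, …, τ N`. The nodes are the first terms of a sequence; later terms are ignored. -/
noncomputable def staircaseError (F : ℝ → ℝ) (N : ℕ) (τ : ℕ → ℝ) : ℝ :=
  ∑ j ∈ Finset.range N, staircaseCellError F (τ j) (τ (j + 1))

section MonotoneIntegrals

variable {F : ℝ → ℝ} {p q a b c x : ℝ}

lemma intervalIntegrable_of_monotoneOn_Icc (hF : MonotoneOn F (Icc p q))
    (ha : a ∈ Icc p q) (hb : b ∈ Icc p q) : IntervalIntegrable F volume a b :=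
  (hF.mono (uIcc_subset_Icc ha hb)).intervalIntegrable

lemma hasDerivAt_integral_of_monotoneOn (hF : MonotoneOn F (Icc p q)) (hx : x ∈ Ioo p q)
    (hcont : ContinuousAt F x) : HasDerivAt (fun t => ∫ ω in p..t, F ω) (F x) x := by
  have hint : IntervalIntegrable F volume p x :=
    intervalIntegrable_of_monotoneOn_Icc hF (left_mem_Icc.2 (hx.1.trans hx.2).le)
      (Ioo_subset_Icc_self hx)
  have hmeas : StronglyMeasurableAtFilter F (nhds x) :=
    ⟨Icc p q, Icc_mem_nhds hx.1 hx.2,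
      (aemeasurable_restrict_of_monotoneOn measurableSet_Icc hF).aestronglyMeasurable⟩
  exact intervalIntegral.integral_hasDerivAt_right hint hmeas hcont

lemma integral_abs_sub_of_monotoneOn (hF : MonotoneOn F (Icc a b)) (hc : c ∈ Icc a b) :
    ∫ ω in a..b, |F ω - F c| =
      (∫ ω in c..b, F ω) - (∫ ω in a..c, F ω) + (2 * c - a - b) * F c := by
  have hab : a ≤ b := hc.1.trans hc.2
  have hleft : IntervalIntegrable F volume a c :=
    intervalIntegrable_of_monotoneOn_Icc hF (left_mem_Icc.2 hab) hc
  have hright : IntervalIntegrable F volume c b :=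
    intervalIntegrable_of_monotoneOn_Icc hF hc (right_mem_Icc.2 hab)
  have habs_left : ∫ ω in a..c, |F ω - F c| = ∫ ω in a..c, (F c - F ω) := by
    refine intervalIntegral.integral_congr fun ω hω => ?_
    rw [uIcc_of_le hc.1] at hω
    exact (abs_of_nonpos (sub_nonpos.2 (hF ⟨hω.1, hω.2.trans hc.2⟩ hc hω.2))).trans (neg_sub _ _)
  have habs_right : ∫ ω in c..b, |F ω - F c| = ∫ ω in c..b, (F ω - F c) := by
    refine intervalIntegral.integral_congr fun ω hω => ?_
    rw [uIcc_of_le hc.2] at hω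
    exact abs_of_nonneg (sub_nonneg.2 (hF hc ⟨hc.1.trans hω.1, hω.2⟩ hω.1))
  calc ∫ ω in a..b, |F ω - F c|
      = (∫ ω in a..c, |F ω - F c|) + ∫ ω in c..b, |F ω - F c| :=
        (intervalIntegral.integral_add_adjacent_intervals
          (hleft.sub intervalIntegrable_const).abs (hright.sub intervalIntegrable_const).abs).symm
    _ = (∫ ω in a..c, (F c - F ω)) + ∫ ω in c..b, (F ω - F c) := by rw [habs_left, habs_right]
    _ = (∫ ω in c..b, F ω) - (∫ ω in a..c, F ω) + (2 * c - a - b) * F c := by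
        rw [intervalIntegral.integral_sub intervalIntegrable_const hleft,
          intervalIntegral.integral_sub hright intervalIntegrable_const,
          intervalIntegral.integral_const, intervalIntegral.integral_const, smul_eq_mul,
          smul_eq_mul]
        ring

end MonotoneIntegrals

section CellError

variable {F : ℝ → ℝ} {p q a b : ℝ}

lemma staircaseCellError_eq_primitive (hF : MonotoneOn F (Icc p q)) (ha : p ≤ a) (hab : a ≤ b)
    (hb : b ≤ q) :
    staircaseCellError F a b =
      (∫ ω in p..a, F ω) + (∫ ω in p..b, F ω) - 2 * ∫ ω in p..(a + b) / 2, F ω := by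
  have hmid : (a + b) / 2 ∈ Icc a b := ⟨by linarith, by linarith⟩
  have hint : ∀ y ∈ Icc a b, IntervalIntegrable F volume p y := fun y hy =>
    intervalIntegrable_of_monotoneOn_Icc hF (left_mem_Icc.2 (ha.trans (hab.trans hb)))
      (Icc_subset_Icc ha hb hy)
  rw [staircaseCellError, integral_abs_sub_of_monotoneOn (hF.mono (Icc_subset_Icc ha hb)) hmid,
    ← intervalIntegral.integral_interval_sub_left (hint b (right_mem_Icc.2 hab)) (hint _ hmid),
    ← intervalIntegral.integral_interval_sub_left (hint _ hmid) (hint a (left_mem_Icc.2 hab))]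
  ring

lemma hasDerivAt_staircaseCellError_left (hF : MonotoneOn F (Icc p b)) (hpa : p < a) (hab : a < b)
    (ha : ContinuousAt F a) (hmid : ContinuousAt F ((a + b) / 2)) :
    HasDerivAt (fun t => staircaseCellError F t b) (F a - F ((a + b) / 2)) a := by
  have hG_endpoint := hasDerivAt_integral_of_monotoneOn hF ⟨hpa, hab⟩ ha
  have hG_mid := (hasDerivAt_integral_of_monotoneOn hF ⟨by linarith, by linarith⟩ hmid).comp a
    (((hasDerivAt_id a).add_const b).div_const 2)
  have heq : (fun t => staircaseCellError F t b) =ᶠ[nhds a] fun t =>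
      (∫ ω in p..t, F ω) + (∫ ω in p..b, F ω) - 2 * ∫ ω in p..(t + b) / 2, F ω := by
    filter_upwards [Ioo_mem_nhds hpa hab] with t ht
    exact staircaseCellError_eq_primitive hF ht.1.le ht.2.le le_rfl
  exact (((hG_endpoint.add_const _).sub (hG_mid.const_mul 2)).congr_of_eventuallyEq
    heq).congr_deriv (by ring)

lemma hasDerivAt_staircaseCellError_right (hF : MonotoneOn F (Icc a q)) (hab : a < b) (hbq : b < q)
    (hb : ContinuousAt F b) (hmid : ContinuousAt F ((a + b) / 2)) :
    HasDerivAt (fun t => staircaseCellError F a t) (F b - F ((a + b) / 2)) b := by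
  have hG_endpoint := hasDerivAt_integral_of_monotoneOn hF ⟨hab, hbq⟩ hb
  have hG_mid := (hasDerivAt_integral_of_monotoneOn hF ⟨by linarith, by linarith⟩ hmid).comp b
    (((hasDerivAt_id b).const_add a).div_const 2)
  have heq : (fun t => staircaseCellError F a t) =ᶠ[nhds b] fun t =>
      (∫ ω in a..a, F ω) + (∫ ω in a..t, F ω) - 2 * ∫ ω in a..(a + t) / 2, F ω := by
    filter_upwards [Ioo_mem_nhds hab hbq] with t ht
    exact staircaseCellError_eq_primitive hF le_rfl ht.1.le ht.2.le
  exact (((hG_endpoint.const_add _).sub (hG_mid.const_mul 2)).congr_of_eventuallyEq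
    heq).congr_deriv (by ring)

end CellError

lemma hasDerivAt_sum_range_update {𝕜 E : Type*} [NontriviallyNormedField 𝕜]
    [NormedAddCommGroup E] [NormedSpace 𝕜 E] {f : 𝕜 → 𝕜 → E} {τ : ℕ → 𝕜} {N k : ℕ} {u v : E}
    (hk : k + 1 < N) (hright : HasDerivAt (fun t => f (τ k) t) u (τ (k + 1)))
    (hleft : HasDerivAt (fun t => f t (τ (k + 2))) v (τ (k + 1))) :
    HasDerivAt
      (fun t => ∑ j ∈ Finset.range N,
        f (Function.update τ (k + 1) t j) (Function.update τ (k + 1) t (j + 1)))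
      (u + v) (τ (k + 1)) := by
  have hterm : ∀ j ∈ Finset.range N, HasDerivAt
      (fun t => f (Function.update τ (k + 1) t j) (Function.update τ (k + 1) t (j + 1)))
      ((if j = k then u else 0) + (if j = k + 1 then v else 0)) (τ (k + 1)) := by
    intro j _
    rcases eq_or_ne j k with rfl | hjk
    · simpa using hright
    rcases eq_or_ne j (k + 1) with rfl | hjk'
    · simpa using hleft
    · simpa [hjk, hjk'] using hasDerivAt_const (τ (k + 1)) (f (τ j) (τ (j + 1)))
  refine (HasDerivAt.fun_sum hterm).congr_deriv ?_
  rw [Finset.sum_add_distrib, Finset.sum_ite_eq', Finset.sum_ite_eq',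
    if_pos (Finset.mem_range.2 (k.lt_succ_self.trans hk)), if_pos (Finset.mem_range.2 hk)]

theorem hasDerivAt_wasserstein_partial_general {F : ℝ → ℝ} {N : ℕ} {τ : ℕ → ℝ}
    (hF : MonotoneOn F (Icc (τ 0) (τ N))) (hinc : ∀ j < N, τ j < τ (j + 1))
    {i : ℕ} (hi0 : 0 < i) (hiN : i < N) (hnode : ContinuousAt F (τ i))
    (hmid_right : ContinuousAt F ((τ i + τ (i + 1)) / 2))
    (hmid_left : ContinuousAt F ((τ (i - 1) + τ i) / 2)) :
    HasDerivAt (fun t => staircaseError F N (Function.update τ i t))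
      (2 * F (τ i) - F ((τ i + τ (i + 1)) / 2) - F ((τ (i - 1) + τ i) / 2)) (τ i) := by
  obtain ⟨k, rfl⟩ := Nat.exists_eq_add_one.2 hi0
  have hτ : StrictMonoOn τ (Icc 0 N) :=
    strictMonoOn_of_lt_add_one ordConnected_Icc fun j _ _ hj => hinc j hj.2
  have hcells : MonotoneOn F (Icc (τ k) (τ (k + 2))) := hF.mono <| Icc_subset_Icc
    (hτ.monotoneOn ⟨le_rfl, by lia⟩ ⟨by lia, by lia⟩ (by lia))
    (hτ.monotoneOn ⟨by lia, by lia⟩ ⟨by lia, le_rfl⟩ (by lia))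
  have hlt_left : τ k < τ (k + 1) := hinc k (by lia)
  have hlt_right : τ (k + 1) < τ (k + 2) := hinc (k + 1) hiN
  refine (hasDerivAt_sum_range_update hiN
    (hasDerivAt_staircaseCellError_right hcells hlt_left hlt_right hnode hmid_left)
    (hasDerivAt_staircaseCellError_left hcells hlt_left hlt_right hnode hmid_right)).congr_deriv ?_
  rw [Nat.add_sub_cancel]
  ring

/-- For a continuous, monotone non-decreasing `F : ℝ → ℝ`, `N ≥ 2`, and
fractions `0 = τ₀ < τ₁ < ... < τ_N = 1`, the 1-Wasserstein approximation error
`W₁ τ = ∑ j, ∫ ω in τ j..τ (j+1), |F ω - F ((τ j + τ (j+1))/2)|`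
has, for each `1 ≤ i ≤ N - 1`, a partial derivative with respect to `τ i` at every point of
the region `0 < τ₁ < ... < τ_{N-1} < 1`, equal to
`2 F (τ i) - F ((τ i + τ (i+1))/2) - F ((τ (i-1) + τ i)/2)`. -/
theorem hasDerivAt_wasserstein_partial
    (F : ℝ → ℝ) (hF : Continuous F) (hmono : Monotone F)
    (N : ℕ) (hN : 2 ≤ N) (τ : ℕ → ℝ) (h0 : τ 0 = 0) (h1 : τ N = 1)
    (hinc : ∀ j < N, τ j < τ (j + 1))
    (i : ℕ) (hi1 : 1 ≤ i) (hi2 : i ≤ N - 1) :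
    HasDerivAt
      (fun t : ℝ =>
        ∑ j ∈ Finset.range N,
          ∫ ω in (Function.update τ i t) j..(Function.update τ i t) (j + 1),
            |F ω - F (((Function.update τ i t) j + (Function.update τ i t) (j + 1)) / 2)|)
      (2 * F (τ i) - F ((τ i + τ (i + 1)) / 2) - F ((τ (i - 1) + τ i) / 2))
      (τ i) := by
  exact hasDerivAt_wasserstein_partial_general (hmono.monotoneOn _) hinc hi1 (by lia)
    hF.continuousAt hF.continuousAt hF.continuousAt
end

section
/- Let F : ℝ → ℝ be continuous and monotone non-decreasing, let N ≥ 1, and fix fractions 0 = τ₀ < τ₁ < ... < τ_N = 1. Then for every vector θ = (θ₀, ..., θ_{N-1}) of real numbers, Σ_{i=0}^{N-1} ∫_{τ_i}^{τ_{i+1}} |F(ω) − F((τ_i + τ_{i+1})/2)| dω ≤ Σ_{i=0}^{N-1} ∫_{τ_i}^{τ_{i+1}} |F(ω) − θ_i| dω; i.e., the choice θ_i = F(τ̂_i) with τ̂_i = (τ_i + τ_{i+1})/2 minimizes the 1-Wasserstein error W₁(Z, θ, τ) = Σ_{i=0}^{N-1} ∫_{τ_i}^{τ_{i+1}} |F(ω)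 − θ_i| dω over all θ. -/
/-! A monotone function lies below its midpoint value on the left half of an interval and above it
on the right half, so its midpoint value is a median for Lebesgue measure on that interval.
Medians minimize the mean absolute deviation, and the `1`-Wasserstein error is a sum of such
deviations in which each `θ i` appears in exactly one term. -/

open MeasureTheory Set

section Median

variable {α : Type*} {mα : MeasurableSpace α} {μ : Measure α} {f : α → ℝ} {c t : ℝ}

/-- The real number `c` is a median of `f` with respect to `μ`: neither the part of the space on
which `f` exceeds `c` nor the part on which `f` is below `c` has more mass than its complement.
Comparing with the complement, rather than with half of the total mass, avoids normalizing `μ`. -/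
def IsMedian (μ : Measure α) (f : α → ℝ) (c : ℝ) : Prop :=
  μ {x | c < f x} ≤ μ {x | f x ≤ c} ∧ μ {x | f x < c} ≤ μ {x | c ≤ f x}

lemma IsMedian.neg (h : IsMedian μ f c) : IsMedian μ (-f) (-c) := by
  simpa only [IsMedian, Pi.neg_apply, neg_lt_neg_iff, neg_le_neg_iff] using h.symm

lemma mul_measureReal_le_setIntegral {s : Set α} {k : ℝ} (hs : NullMeasurableSet s μ)
    (hμs : μ s ≠ ⊤) (hf : IntegrableOn f s μ) (hk : ∀ x ∈ s, k ≤ f x) :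
    k * μ.real s ≤ ∫ x in s, f x ∂μ := by
  have hae : ∀ᵐ x ∂μ.restrict s, k ≤ f x := (ae_restrict_mem₀ hs).mono hk
  calc k * μ.real s = ∫ _ in s, k ∂μ := by rw [setIntegral_const, smul_eq_mul, mul_comm]
    _ ≤ ∫ x in s, f x ∂μ := setIntegral_mono_ae_restrict (integrableOn_const hμs) hf hae

-- Moving `c` up to `t` costs `t - c` wherever `f ≤ c` and gains at most `t - c` elsewhere.
lemma integral_abs_sub_le_of_measure_lt_le_measure_le [IsFiniteMeasure μ] (hf : Integrable f μ)
    (hc : μ {x | c < f x} ≤ μ {x | f x ≤ c}) (hct : c ≤ t) :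
    ∫ x, |f x - c| ∂μ ≤ ∫ x, |f x - t| ∂μ := by
  have hint (s : ℝ) : Integrable (fun x ↦ |f x - s|) μ := (hf.sub (integrable_const s)).abs
  have hdiff : Integrable (fun x ↦ |f x - t| - |f x - c|) μ := (hint t).sub (hint c)
  have hmeas : NullMeasurableSet {x | f x ≤ c} μ :=
    nullMeasurableSet_le hf.aemeasurable aemeasurable_const
  have hcompl : {x | f x ≤ c}ᶜ = {x | c < f x} := by ext; simp
  have hlow : (t - c) * μ.real {x | f x ≤ c} ≤
      ∫ x in {x | f x ≤ c}, (|f x - t| - |f x - c|) ∂μ := by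
    refine mul_measureReal_le_setIntegral hmeas (measure_ne_top _ _) hdiff.integrableOn
      fun x (hx : f x ≤ c) ↦ ?_
    rw [abs_of_nonpos (sub_nonpos.2 hx)]
    linarith [neg_abs_le (f x - t)]
  have hhigh : -(t - c) * μ.real {x | c < f x} ≤
      ∫ x in {x | c < f x}, (|f x - t| - |f x - c|) ∂μ := by
    refine mul_measureReal_le_setIntegral (hcompl ▸ hmeas.compl) (measure_ne_top _ _)
      hdiff.integrableOn fun x (hx : c < f x) ↦ ?_
    rw [abs_of_pos (sub_pos.2 hx)]
    linarith [le_abs_self (f x - t)]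
  have hmass : μ.real {x | c < f x} ≤ μ.real {x | f x ≤ c} :=
    ENNReal.toReal_mono (measure_ne_top _ _) hc
  rw [← sub_nonneg, ← integral_sub (hint t) (hint c), ← integral_add_compl₀ hmeas hdiff, hcompl]
  linarith [mul_le_mul_of_nonneg_left hmass (sub_nonneg.2 hct)]

theorem IsMedian.integral_abs_sub_le [IsFiniteMeasure μ] (h : IsMedian μ f c)
    (hf : Integrable f μ) (t : ℝ) : ∫ x, |f x - c| ∂μ ≤ ∫ x, |f x - t| ∂μ := by
  obtain hct | htc := le_total c t
  · exact integral_abs_sub_le_of_measure_lt_le_measure_le hf h.1 hct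
  · simpa only [Pi.neg_apply, neg_sub_neg, abs_sub_comm] using
      integral_abs_sub_le_of_measure_lt_le_measure_le hf.neg h.neg.1 (neg_le_neg htc)

end Median

section Midpoint

variable {F : ℝ → ℝ} {a b : ℝ}

theorem isMedian_midpoint_of_monotoneOn (hF : MonotoneOn F (Icc a b)) :
    IsMedian (volume.restrict (Ioc a b)) F (F ((a + b) / 2)) := by
  set m := (a + b) / 2 with hm
  have hleft : ∀ x ∈ Ioc a b, x ≤ m → F x ≤ F m := fun x hx hxm ↦
    hF (Ioc_subset_Icc_self hx) ⟨by linarith [hx.1], by linarith [hx.1, hx.2]⟩ hxm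
  have hright : ∀ x ∈ Ioc a b, m ≤ x → F m ≤ F x := fun x hx hmx ↦
    hF ⟨by linarith [hx.1, hx.2], by linarith [hx.2]⟩ (Ioc_subset_Icc_self hx) hmx
  have hhalf : volume (Ioc m b) = volume (Ioc a m) := by
    rw [Real.volume_Ioc, Real.volume_Ioc, show b - m = m - a by rw [hm]; ring]
  simp only [IsMedian, Measure.restrict_apply' measurableSet_Ioc]
  constructor
  · calc volume ({x | F m < F x} ∩ Ioc a b) ≤ volume (Ioc m b) :=
          measure_mono fun x ⟨hx, hxI⟩ ↦
            ⟨not_le.1 fun hxm ↦ (hleft x hxI hxm).not_gt hx, hxI.2⟩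
      _ = volume (Ioc a m) := hhalf
      _ ≤ volume ({x | F x ≤ F m} ∩ Ioc a b) := measure_mono fun x hx ↦
          have hxI : x ∈ Ioc a b := ⟨hx.1, by linarith [hx.1, hx.2]⟩
          ⟨hleft x hxI hx.2, hxI⟩
  · calc volume ({x | F x < F m} ∩ Ioc a b) ≤ volume (Ioc a m) :=
          measure_mono fun x ⟨hx, hxI⟩ ↦
            ⟨hxI.1, le_of_not_ge fun hmx ↦ (hright x hxI hmx).not_gt hx⟩
      _ = volume (Ioc m b) := hhalf.symm
      _ ≤ volume ({x | F m ≤ F x} ∩ Ioc a b) := measure_mono fun x hx ↦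
          have hxI : x ∈ Ioc a b := ⟨by linarith [hx.1, hx.2], hx.2⟩
          ⟨hright x hxI hx.1.le, hxI⟩

theorem integral_abs_sub_midpoint_le_of_monotoneOn (hF : MonotoneOn F (Icc a b)) (hab : a ≤ b)
    (t : ℝ) : ∫ ω in a..b, |F ω - F ((a + b) / 2)| ≤ ∫ ω in a..b, |F ω - t| := by
  have hint : IntegrableOn F (Ioc a b) :=
    (hF.integrableOn_isCompact isCompact_Icc).mono_set Ioc_subset_Icc_self
  simpa only [intervalIntegral.integral_of_le hab] using
    (isMedian_midpoint_of_monotoneOn hF).integral_abs_sub_le hint t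

end Midpoint

theorem midpoint_values_minimize_wasserstein_general (F : ℝ → ℝ) (N : ℕ) (τ : ℕ → ℝ)
    (hτ : ∀ i < N, τ i ≤ τ (i + 1)) (hF : ∀ i < N, MonotoneOn F (Icc (τ i) (τ (i + 1))))
    (θ : ℕ → ℝ) :
    (∑ i ∈ Finset.range N, ∫ ω in τ i..τ (i + 1), |F ω - F ((τ i + τ (i + 1)) / 2)|)
      ≤ ∑ i ∈ Finset.range N, ∫ ω in τ i..τ (i + 1), |F ω - θ i| := by
  refine Finset.sum_le_sum fun i hi ↦ ?_
  have hiN : i < N := Finset.mem_range.1 hi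
  exact integral_abs_sub_midpoint_le_of_monotoneOn (hF i hiN) (hτ i hiN) (θ i)

/-- For a continuous, monotone non-decreasing `F : ℝ → ℝ`, `N ≥ 1`, and
fractions `0 = τ₀ < τ₁ < ... < τ_N = 1`, the choice `θ i = F ((τ i + τ (i+1))/2)` minimizes
the 1-Wasserstein error `∑ i, ∫ ω in τ i..τ (i+1), |F ω - θ i|` over all `θ`. -/
theorem midpoint_values_minimize_wasserstein
    (F : ℝ → ℝ) (hF : Continuous F) (hmono : Monotone F)
    (N : ℕ) (hN : 1 ≤ N) (τ : ℕ → ℝ) (h0 : τ 0 = 0) (h1 : τ N = 1)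
    (hinc : ∀ j < N, τ j < τ (j + 1)) (θ : ℕ → ℝ) :
    (∑ i ∈ Finset.range N, ∫ ω in τ i..τ (i + 1), |F ω - F ((τ i + τ (i + 1)) / 2)|)
      ≤ ∑ i ∈ Finset.range N, ∫ ω in τ i..τ (i + 1), |F ω - θ i| :=
  midpoint_values_minimize_wasserstein_general F N τ (fun i hi ↦ (hinc i hi).le)
    (fun _ _ ↦ hmono.monotoneOn _) θ
end

section
/- Let F : ℝ → ℝ be continuous and monotone non-decreasing, let a be a real number, and let t₀ > a be such that F is differentiable at m₀ = (a + t₀)/2. Then the function t ↦ ∫_a^{(a+t)/2} (F((a + t)/2) − F(ω)) dω is differentiable at t₀ with derivative ((t₀ − a)/4) · F'(m₀). -/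
/-!
Splitting `∫ ω in a..x, (F x - F ω)` as `(x - a) • F x - ∫ ω in a..x, F ω` lets the product rule
and the fundamental theorem of calculus apply at `x = m`, where the two terms `F m` cancel; this
cancellation is the vanishing of the boundary term in the Leibniz rule.
-/

section

open Filter MeasureTheory Topology

variable {E : Type*} [NormedAddCommGroup E] {F : ℝ → E} {a m : ℝ}

theorem eventually_intervalIntegrable_right_of_continuousAt {μ : Measure ℝ}
    [IsLocallyFiniteMeasure μ] (hF : IntervalIntegrable F μ a m)
    (hmeas : StronglyMeasurableAtFilter F (𝓝 m) μ) (hcont : ContinuousAt F m) :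
    ∀ᶠ x in 𝓝 m, IntervalIntegrable F μ a x := by
  have near : ∀ᶠ x in 𝓝 m, IntervalIntegrable F μ m x :=
    hcont.tendsto.eventually_intervalIntegrable hmeas (μ.finiteAt_nhds m)
      tendsto_const_nhds tendsto_id
  exact near.mono fun _ hx => hF.trans hx

variable [NormedSpace ℝ E] [CompleteSpace E] {d : E}

theorem intervalIntegral_const_sub (c : E) (hF : IntervalIntegrable F volume a m) :
    ∫ ω in a..m, (c - F ω) = (m - a) • c - ∫ ω in a..m, F ω := by
  rw [intervalIntegral.integral_sub intervalIntegrable_const hF, intervalIntegral.integral_const]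

theorem hasDerivAt_integral_apply_sub (hF : IntervalIntegrable F volume a m)
    (hmeas : StronglyMeasurableAtFilter F (𝓝 m)) (hd : HasDerivAt F d m) :
    HasDerivAt (fun x => ∫ ω in a..x, (F x - F ω)) ((m - a) • d) m := by
  have split : (fun x => ∫ ω in a..x, (F x - F ω)) =ᶠ[𝓝 m]
      fun x => (x - a) • F x - ∫ ω in a..x, F ω :=
    (eventually_intervalIntegrable_right_of_continuousAt hF hmeas hd.continuousAt).mono
      fun x hx => intervalIntegral_const_sub (F x) hx
  have rect : HasDerivAt (fun x => (x - a) • F x) ((m - a) • d + (1 : ℝ) • F m) m :=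
    ((hasDerivAt_id m).sub_const a).smul hd
  have primitive : HasDerivAt (fun x => ∫ ω in a..x, F ω) (F m) m :=
    intervalIntegral.integral_hasDerivAt_right hF hmeas hd.continuousAt
  refine ((rect.sub primitive).congr_of_eventuallyEq split).congr_deriv ?_
  rw [one_smul, add_sub_cancel_right]

theorem hasDerivAt_lower_half_piece_general {t₀ : ℝ}
    (hF : IntervalIntegrable F volume a ((a + t₀) / 2))
    (hmeas : StronglyMeasurableAtFilter F (𝓝 ((a + t₀) / 2)))
    (hd : HasDerivAt F d ((a + t₀) / 2)) :
    HasDerivAt (fun t => ∫ ω in a..((a + t) / 2), (F ((a + t) / 2) - F ω))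
      (((t₀ - a) / 4) • d) t₀ := by
  have midpoint : HasDerivAt (fun t : ℝ => (a + t) / 2) (1 / 2) t₀ :=
    ((hasDerivAt_id t₀).const_add a).div_const 2
  refine ((hasDerivAt_integral_apply_sub hF hmeas hd).scomp t₀ midpoint).congr_deriv ?_
  rw [smul_smul]
  congr 1
  ring

end

/-- For a continuous, monotone non-decreasing `F : ℝ → ℝ`, a real `a`, and
`t₀ > a` such that `F` has derivative `d` at the midpoint `m₀ = (a + t₀)/2`, the function
`t ↦ ∫ ω in a..((a + t)/2), (F ((a + t)/2) - F ω)` is differentiable at `t₀` with derivative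
`((t₀ - a)/4) * d`. -/
theorem hasDerivAt_lower_half_piece
    (F : ℝ → ℝ) (hF : Continuous F) (hmono : Monotone F)
    (a t₀ : ℝ) (ht : a < t₀) (d : ℝ) (hd : HasDerivAt F d ((a + t₀) / 2)) :
    HasDerivAt (fun t : ℝ => ∫ ω in a..((a + t) / 2), (F ((a + t) / 2) - F ω))
      ((t₀ - a) / 4 * d) t₀ :=
  hasDerivAt_lower_half_piece_general (hF.intervalIntegrable _ _)
    (hF.stronglyMeasurableAtFilter _ _) hd
end
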